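/- There is a constant c > 0 such that for all dimensions d ∈ ℕ and all ε ∈ (0, 1/2), the information complexity of L₂-approximation on the class F_d^log satisfies n(ε, F_d^log, L₂) ≤ c · d · ε^{-3} · log³(ε^{-1}); that is, there exist n ≤ c · d · ε^{-3} · log³(ε^{-1}), points x₁,…,xₙ ∈ [0,1]^d and a map φ : ℂⁿ → L₂([0,1]^d) such that ‖f − φ(f(x₁),…,f(xₙ))‖_{L₂} ≤ ε for every f ∈ F_d^log. -/

import Mathlib

open MeasureTheory Real Finset

noncomputable section

/-- The unit cube `[0,1]^d`. -/
def cube (d : ℕ) : Set (Fin d → ℝ) := Set.univ.pi fun _ => Set.Icc 0 1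

/-- The trigonometric character `e^{2πi⟨k,x⟩}`. -/
def eK (d : ℕ) (k : Fin d → ℤ) (x : Fin d → ℝ) : ℂ :=
  Complex.exp (2 * Real.pi * Complex.I * ∑ i, (k i : ℂ) * (x i : ℂ))

/-- The Fourier coefficient `f̂(k) = ∫_{[0,1]^d} f(x) e^{-2πi⟨k,x⟩} dx`. -/
def fCoeff (d : ℕ) (f : (Fin d → ℝ) → ℂ) (k : Fin d → ℤ) : ℂ :=
  ∫ x in cube d, f x * Complex.exp (-(2 * Real.pi * Complex.I) * ∑ i, (k i : ℂ) * (x i : ℂ))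

/-- `f` is 1-periodic in each coordinate. -/
def Periodic1 (d : ℕ) (f : (Fin d → ℝ) → ℂ) : Prop :=
  ∀ (x : Fin d → ℝ) (i : Fin d), f (Function.update x i (x i + 1)) = f x

/-- The weight `max(1, log ‖k‖_∞)`. -/
def logWeight (d : ℕ) (k : Fin d → ℤ) : ℝ :=
  max 1 (Real.log ((Finset.univ.sup fun i => (k i).natAbs : ℕ) : ℝ))

/-- The class `F_d^log` of continuous 1-periodic functions with
`∑_k |f̂(k)| max(1, log ‖k‖_∞) ≤ 1`. -/
def FdLog (d : ℕ) : Set ((Fin d → ℝ) → ℂ) :=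
  {f | Continuous f ∧ Periodic1 d f ∧
    Summable (fun k : Fin d → ℤ => ‖fCoeff d f k‖ * logWeight d k) ∧
    ∑' k : Fin d → ℤ, ‖fCoeff d f k‖ * logWeight d k ≤ 1}

lemma periodic_int {d : ℕ} {f : (Fin d → ℝ) → ℂ} (hf : Periodic1 d f) (x : Fin d → ℝ)
    (m : Fin d → ℤ) : f (fun i => x i + m i) = f x := by
  have h1 : ∀ (i : Fin d) (n : ℕ) (x : Fin d → ℝ), f (Function.update x i (x i + n)) = f x := by
    intro i n
    induction n with
    | zero => intro x; simp
    | succ n ih =>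
      intro x
      have := hf (Function.update x i (x i + n)) i
      rw [ih] at this
      rw [← this]
      simp [add_assoc]
  have h2 : ∀ (i : Fin d) (n : ℤ) (x : Fin d → ℝ), f (Function.update x i (x i + n)) = f x := by
    intro i n x
    obtain ⟨k, rfl | rfl⟩ := n.eq_nat_or_neg
    · simpa using h1 i k x
    · have := h1 i k (Function.update x i (x i + ((-(k:ℤ) : ℤ) : ℝ)))
      rw [← this]
      simp
  have h3 : ∀ s : Finset (Fin d), f (fun i => if i ∈ s then x i + m i else x i) = f x := by
    intro s
    induction s using Finset.induction_on with
    | empty => simp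
    | insert a s ha ih =>
      rw [← ih, ← h2 a (m a) (fun i => if i ∈ s then x i + m i else x i)]
      congr 1
      ext i
      by_cases hi : i = a
      · subst hi; simp [ha]
      · simp [hi]
  simpa using h3 Finset.univ

lemma hasSum_fourier {d : ℕ} {f : (Fin d → ℝ) → ℂ} (hc : Continuous f) (hp : Periodic1 d f)
    (hs : Summable (fun k => ‖fCoeff d f k‖)) (x : Fin d → ℝ) :
    HasSum (fun k => fCoeff d f k * eK d k x) (f x) := by
  let Q : (Fin d → ℝ) → UnitAddTorus (Fin d) := fun x i => (x i : UnitAddCircle)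
  let G : UnitAddTorus (Fin d) → ℂ := fun y => f (fun i => (AddCircle.equivIco 1 0 (y i) : ℝ))
  have hG : ∀ x, G (Q x) = f x := by
    intro x
    have : ∀ i, ∃ m : ℤ, ((AddCircle.equivIco 1 0 (Q x i) : ℝ)) = x i + m := by
      intro i
      have h : ((AddCircle.equivIco (1:ℝ) 0 (Q x i) : ℝ) : AddCircle (1:ℝ)) = ((x i : ℝ) : AddCircle (1:ℝ)) :=
        AddCircle.coe_equivIco
      rw [QuotientAddGroup.eq] at h
      obtain ⟨m, hm⟩ := AddSubgroup.mem_zmultiples_iff.1 h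
      refine ⟨-m, ?_⟩
      simp at hm ⊢
      linarith
    choose m hm using this
    have := periodic_int hp x m
    rw [← this]
    simp only [G, hm]
  have hq : IsOpenQuotientMap Q :=
    IsOpenQuotientMap.piMap (fun _ => QuotientAddGroup.isOpenQuotientMap_mk)
  have hGc : Continuous G := by
    rw [hq.isQuotientMap.continuous_iff]
    have : G ∘ Q = f := funext hG
    rwa [this]
  have hmF : ∀ (k : Fin d → ℤ) (x : Fin d → ℝ), UnitAddTorus.mFourier k (Q x) = eK d k x := by
    intro k x
    simp only [UnitAddTorus.mFourier, ContinuousMap.coe_mk, Q, eK]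
    rw [Finset.mul_sum, Complex.exp_sum]
    refine Finset.prod_congr rfl fun i _ => ?_
    rw [fourier_coe_apply]
    congr 1
    simp
    ring
  have hco : ∀ k, UnitAddTorus.mFourierCoeff G k = fCoeff d f k := by
    intro k
    rw [UnitAddTorus.mFourierCoeff_eq_integral G k (fun _ => 0)]
    unfold fCoeff
    have hset : (cube d) =ᵐ[volume] {x : Fin d → ℝ | ∀ i, x i ∈ Set.Ioc (0:ℝ) (0 + 1)} := by
      have := (Measure.univ_pi_Ioc_ae_eq_Icc (μ := fun _ : Fin d => (volume : Measure ℝ)) (f := fun _ => 0) (g := fun _ => 1)).symm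
      rw [← volume_pi] at this
      have e1 : cube d = Set.Icc (fun _ => 0) (fun _ => 1) := by simp [cube, Set.pi_univ_Icc]
      have e2 : {x : Fin d → ℝ | ∀ i, x i ∈ Set.Ioc (0:ℝ) (0 + 1)} =
          Set.univ.pi fun _ => Set.Ioc 0 1 := by ext; simp
      rw [e1, e2]
      exact this
    rw [setIntegral_congr_set hset]
    congr 1
    ext x
    have e1 := hmF (-k) x
    have e2 := hG x
    simp only [Q] at e1 e2
    rw [e1, e2, smul_eq_mul, mul_comm]
    simp [eK]
  have := UnitAddTorus.hasSum_mFourier_series_apply_of_summable (f := ⟨G, hGc⟩) 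
    (by
      apply Summable.of_norm
      refine hs.congr fun k => ?_
      rw [← hco k]
      rfl) (Q x)
  convert this using 1
  · ext k
    rw [hmF]
    erw [hco]
    rfl
  · exact (hG x).symm

lemma select_points {Ω J : Type*} [MeasurableSpace Ω] (μ : Measure Ω) [IsProbabilityMeasure μ]
    (C : Set Ω) (hC : μ Cᶜ = 0) [Fintype J] (A : J → Set Ω) (hA : ∀ j, MeasurableSet (A j))
    (a : ℝ) (haμ : ∀ j, a ≤ μ.real (A j)) (W : J → ℝ) (hW : ∀ j, 0 ≤ W j) (n : ℕ)
    (ha1 : a ≤ 1) :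
    ∃ x : Fin n → Ω, (∀ i, x i ∈ C) ∧
      ∑ j, W j * ∏ i, (1 - (A j).indicator (fun _ => (1/2 : ℝ)) (x i)) ≤
        (1 - a / 2) ^ n * ∑ j, W j := by
  induction n generalizing W with
  | zero => exact ⟨Fin.elim0, fun i => i.elim0, by simp⟩
  | succ n ih =>
    have hint : ∀ j, Integrable (fun x => W j * (1 - (A j).indicator (fun _ => (1/2 : ℝ)) x)) μ :=
      fun j => ((integrable_const 1).sub ((integrable_const _).indicator (hA j))).const_mul _
    obtain ⟨y, hy, hle⟩ := exists_notMem_null_le_integral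
      (integrable_finsetSum Finset.univ fun j _ => hint j) hC
    rw [integral_finsetSum _ (fun j _ => hint j)] at hle
    have hI : ∀ j, ∫ x, W j * (1 - (A j).indicator (fun _ => (1/2 : ℝ)) x) ∂μ
        = W j * (1 - μ.real (A j) / 2) := by
      intro j
      rw [integral_const_mul, integral_sub (integrable_const 1)
        ((integrable_const _).indicator (hA j)), integral_indicator_const _ (hA j)]
      simp
      ring_nf
      simp
    simp only [hI] at hle
    have hnn : ∀ j, 0 ≤ 1 - (A j).indicator (fun _ => (1/2 : ℝ)) y := by
      intro j
      by_cases h : y ∈ A j <;> simp [h]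
      norm_num
    obtain ⟨x, hx, hxle⟩ := ih (fun j => W j * (1 - (A j).indicator (fun _ => (1/2 : ℝ)) y))
      (fun j => mul_nonneg (hW j) (hnn j))
    refine ⟨Fin.cons y x, ?_, ?_⟩
    · intro i
      refine Fin.cases ?_ ?_ i
      · simpa using hy
      · simpa using hx
    · simp only [Fin.prod_univ_succ, Fin.cons_zero, Fin.cons_succ, ← mul_assoc]
      refine hxle.trans ?_
      rw [pow_succ, mul_assoc]
      refine mul_le_mul_of_nonneg_left ?_ (pow_nonneg (by linarith) _)
      refine hle.trans ?_
      rw [Finset.mul_sum]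
      refine Finset.sum_le_sum fun j _ => ?_
      rw [mul_comm]
      exact mul_le_mul_of_nonneg_right (by linarith [haμ j]) (hW j)

lemma exp_quad (u : ℝ) (hu : |u| ≤ 1) : Real.exp u ≤ 1 + u + u ^ 2 := by
  have := (abs_le.1 (Real.abs_exp_sub_one_sub_id_le hu)).2
  linarith

lemma avg_exp {ι : Type*} [Fintype ι] (w g : ι → ℝ) (hw : ∀ i, 0 ≤ w i) (hw1 : ∑ i, w i = 1)
    (hg : ∀ i, |g i| ≤ 1) (l : ℝ) (hl : |l| ≤ 1/2) :
    ∑ i, w i * Real.exp (l * (g i - ∑ k, w k * g k)) ≤ Real.exp (4 * l ^ 2) := by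
  set p := ∑ k, w k * g k with hp
  have hp1 : |p| ≤ 1 := by
    calc |p| ≤ ∑ k, |w k * g k| := Finset.abs_sum_le_sum_abs _ _
      _ ≤ ∑ k, w k := Finset.sum_le_sum fun k _ => by
          rw [abs_mul, abs_of_nonneg (hw k)]
          exact mul_le_of_le_one_right (hw k) (hg k)
      _ = 1 := hw1
  have hd : ∀ i, |g i - p| ≤ 2 := fun i => (abs_sub _ _).trans (by linarith [hg i])
  calc ∑ i, w i * Real.exp (l * (g i - p))
      ≤ ∑ i, w i * (1 + l * (g i - p) + 4 * l ^ 2) := by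
        refine Finset.sum_le_sum fun i _ => mul_le_mul_of_nonneg_left ?_ (hw i)
        have h1 : |l * (g i - p)| ≤ 1 := by
          rw [abs_mul]
          calc |l| * |g i - p| ≤ 1/2 * 2 := by gcongr; exact hd i
            _ = 1 := by norm_num
        refine (exp_quad _ h1).trans ?_
        have : (g i - p) ^ 2 ≤ 4 := by
          rw [← sq_abs]
          nlinarith [hd i, abs_nonneg (g i - p)]
        have : (l * (g i - p)) ^ 2 ≤ 4 * l ^ 2 := by
          rw [mul_pow]
          nlinarith [sq_nonneg l]
        linarith
    _ = 1 + 4 * l ^ 2 := by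
        have : ∀ i, w i * (1 + l * (g i - p) + 4 * l ^ 2) =
          (1 - l * p + 4 * l ^ 2) * w i + l * (w i * g i) := fun i => by ring
        simp only [this, Finset.sum_add_distrib, ← Finset.mul_sum, hw1, ← hp]
        ring
    _ ≤ Real.exp (4 * l ^ 2) := by linarith [Real.add_one_le_exp (4 * l ^ 2)]

lemma exists_le_avg {ι : Type*} [Fintype ι] (w F : ι → ℝ) (hw : ∀ i, 0 ≤ w i)
    (hw1 : ∑ i, w i = 1) : ∃ i, F i ≤ ∑ k, w k * F k := by
  by_contra! h
  have hlt : ∑ i, w i * (∑ k, w k * F k) < ∑ i, w i * F i := by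
    have hex : ∃ i, 0 < w i := by
      by_contra! h'
      have : ∑ i, w i ≤ 0 := Finset.sum_nonpos fun i _ => h' i
      linarith
    obtain ⟨i, hi⟩ := hex
    exact Finset.sum_lt_sum (fun k _ => mul_le_mul_of_nonneg_left (h k).le (hw k))
      ⟨i, Finset.mem_univ _, mul_lt_mul_of_pos_left (h i) hi⟩
  rw [← Finset.sum_mul, hw1, one_mul] at hlt
  exact lt_irrefl _ hlt

lemma maurey_pot {Ω ι : Type*} [MeasurableSpace Ω] (ν : Measure Ω) [IsFiniteMeasure ν]
    [Fintype ι] (g : ι → Ω → ℝ) (hgm : ∀ i, Measurable (g i)) (hg : ∀ i x, |g i x| ≤ 1)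
    (w : ι → ℝ) (hw : ∀ i, 0 ≤ w i) (hw1 : ∑ i, w i = 1) (l : ℝ) (hl : |l| ≤ 1/2) (m : ℕ) :
    ∃ κ : Fin m → ι, ∫ x, (Real.exp (l * ∑ j, (g (κ j) x - ∑ k, w k * g k x)) +
        Real.exp (-l * ∑ j, (g (κ j) x - ∑ k, w k * g k x))) ∂ν
      ≤ 2 * Real.exp (4 * l ^ 2) ^ m * ν.real Set.univ := by
  have hpm : Measurable fun x => ∑ k, w k * g k x :=
    Finset.measurable_fun_sum _ fun k _ => (hgm k).const_mul _
  have hp1 : ∀ x, |∑ k, w k * g k x| ≤ 1 := by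
    intro x
    calc |∑ k, w k * g k x| ≤ ∑ k, |w k * g k x| := Finset.abs_sum_le_sum_abs _ _
      _ ≤ ∑ k, w k := Finset.sum_le_sum fun k _ => by
          rw [abs_mul, abs_of_nonneg (hw k)]
          exact mul_le_of_le_one_right (hw k) (hg k x)
      _ = 1 := hw1
  have hint : ∀ (r : ℕ) (κ : Fin r → ι) (l : ℝ), Integrable
      (fun x => Real.exp (l * ∑ j, (g (κ j) x - ∑ k, w k * g k x))) ν := by
    intro r κ l
    refine Integrable.of_bound (C := Real.exp (|l| * (r * 2))) ?_ ?_
    · refine Measurable.aestronglyMeasurable (Real.measurable_exp.comp (Measurable.const_mul ?_ _))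
      exact Finset.measurable_fun_sum _ fun j _ => (hgm _).sub hpm
    · refine Filter.Eventually.of_forall fun x => ?_
      rw [Real.norm_eq_abs, Real.abs_exp, Real.exp_le_exp]
      refine (le_abs_self _).trans ?_
      rw [abs_mul]
      gcongr
      refine (Finset.abs_sum_le_sum_abs _ _).trans ?_
      calc ∑ j, |g (κ j) x - ∑ k, w k * g k x| ≤ ∑ j : Fin r, (2:ℝ) :=
            Finset.sum_le_sum fun j _ => (abs_sub _ _).trans (by linarith [hg (κ j) x, hp1 x])
        _ = r * 2 := by simp
  induction m with
  | zero => 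
    refine ⟨Fin.elim0, ?_⟩
    simp
    norm_num [mul_comm]
  | succ m ih =>
    obtain ⟨κ, hκ⟩ := ih
    set S : Ω → ℝ := fun x => ∑ j, (g (κ j) x - ∑ k, w k * g k x) with hS
    obtain ⟨i, hi⟩ := exists_le_avg w (fun i => ∫ x, (Real.exp (l * ∑ j, (g ((Fin.cons i κ : Fin (m+1) → ι) j) x - ∑ k, w k * g k x)) +
        Real.exp (-l * ∑ j, (g ((Fin.cons i κ : Fin (m+1) → ι) j) x - ∑ k, w k * g k x))) ∂ν) hw hw1
    refine ⟨Fin.cons i κ, hi.trans ?_⟩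
    have hint2 : ∀ i, Integrable (fun x => w i * (Real.exp (l * ∑ j, (g ((Fin.cons i κ : Fin (m+1) → ι) j) x - ∑ k, w k * g k x)) +
        Real.exp (-l * ∑ j, (g ((Fin.cons i κ : Fin (m+1) → ι) j) x - ∑ k, w k * g k x)))) ν :=
      fun i => ((hint _ _ _).add (hint _ _ _)).const_mul _
    simp only [← integral_const_mul]
    rw [← integral_finsetSum _ (fun i _ => hint2 i)]
    calc _ ≤ ∫ x, Real.exp (4 * l ^ 2) * (Real.exp (l * S x) + Real.exp (-l * S x)) ∂ν := by
          refine integral_mono (integrable_finsetSum _ fun i _ => hint2 i)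
            (((hint _ _ _).add (hint _ _ _)).const_mul _) fun x => ?_
          have e1 := avg_exp w (fun i => g i x) hw hw1 (fun i => hg i x) l hl
          have e2 := avg_exp w (fun i => g i x) hw hw1 (fun i => hg i x) (-l) (by simpa using hl)
          have hsplit : ∀ i, w i * (Real.exp (l * ∑ j, (g ((Fin.cons i κ : Fin (m+1) → ι) j) x - ∑ k, w k * g k x)) +
              Real.exp (-l * ∑ j, (g ((Fin.cons i κ : Fin (m+1) → ι) j) x - ∑ k, w k * g k x))) =
              w i * Real.exp (l * (g i x - ∑ k, w k * g k x)) * Real.exp (l * S x) +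
              w i * Real.exp (-l * (g i x - ∑ k, w k * g k x)) * Real.exp (-l * S x) := by
            intro i
            simp only [Fin.sum_univ_succ, Fin.cons_zero, Fin.cons_succ, mul_add l, mul_add (-l),
              Real.exp_add, hS]
            ring
          simp only [hsplit, Finset.sum_add_distrib, ← Finset.sum_mul]
          rw [mul_add]
          have e3 : Real.exp (4 * (-l) ^ 2) = Real.exp (4 * l ^ 2) := by rw [neg_sq]
          rw [e3] at e2
          gcongr
      _ = Real.exp (4 * l ^ 2) * ∫ x, (Real.exp (l * S x) + Real.exp (-l * S x)) ∂ν :=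
          integral_const_mul _ _
      _ ≤ Real.exp (4 * l ^ 2) * (2 * Real.exp (4 * l ^ 2) ^ m * ν.real Set.univ) := by gcongr
      _ = _ := by ring

lemma maurey {Ω ι : Type*} [MeasurableSpace Ω] (ν : Measure Ω) [IsFiniteMeasure ν]
    [Fintype ι] (g : ι → Ω → ℝ) (hgm : ∀ i, Measurable (g i)) (hg : ∀ i x, |g i x| ≤ 1)
    (w : ι → ℝ) (hw : ∀ i, 0 ≤ w i) (hw1 : ∑ i, w i = 1) (s : ℝ) (hs : 0 < s) (hs4 : s ≤ 4)
    (m : ℕ) (hm : 0 < m) :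
    ∃ κ : Fin m → ι,
      ν.real {x | s ≤ |(∑ j, g (κ j) x) / m - ∑ k, w k * g k x|} ≤
        2 * Real.exp (- (m * s ^ 2 / 16)) * ν.real Set.univ := by
  have hl : |s/8| ≤ 1/2 := by rw [abs_of_pos (by positivity)]; linarith
  obtain ⟨κ, hκ⟩ := maurey_pot ν g hgm hg w hw hw1 (s/8) hl m
  refine ⟨κ, ?_⟩
  set S : Ω → ℝ := fun x => ∑ j, (g (κ j) x - ∑ k, w k * g k x) with hS
  have hpm : Measurable fun x => ∑ k, w k * g k x :=
    Finset.measurable_fun_sum _ fun k _ => (hgm k).const_mul _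
  have hSm : Measurable S := Finset.measurable_fun_sum _ fun j _ => (hgm _).sub hpm
  have hm' : (0:ℝ) < m := by exact_mod_cast hm
  have hsub : {x | s ≤ |(∑ j, g (κ j) x) / m - ∑ k, w k * g k x|} ⊆
      {x | Real.exp (s/8 * (m * s)) ≤ Real.exp (s/8 * S x) + Real.exp (-(s/8) * S x)} := by
    intro x hx
    simp only [Set.mem_ofPred_eq] at hx ⊢
    have e : S x = m * ((∑ j, g (κ j) x) / m - ∑ k, w k * g k x) := by
      simp only [hS, Finset.sum_sub_distrib, Finset.sum_const, Finset.card_univ, Fintype.card_fin,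
        nsmul_eq_mul]
      field_simp
    have h1 : m * s ≤ |S x| := by
      rw [e, abs_mul, abs_of_pos hm']
      gcongr
    rcases le_abs.1 h1 with h | h
    · have : Real.exp (s/8 * (m * s)) ≤ Real.exp (s/8 * S x) :=
        Real.exp_le_exp.2 (by gcongr)
      linarith [Real.exp_pos (-(s/8) * S x)]
    · have : Real.exp (s/8 * (m * s)) ≤ Real.exp (-(s/8) * S x) := by
        apply Real.exp_le_exp.2
        rw [neg_mul, ← mul_neg]
        gcongr
      linarith [Real.exp_pos ((s/8) * S x)]
  have hb : ∀ x, |S x| ≤ m * 2 := by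
    intro x
    have hp1 : |∑ k, w k * g k x| ≤ 1 := by
      calc |∑ k, w k * g k x| ≤ ∑ k, |w k * g k x| := Finset.abs_sum_le_sum_abs _ _
        _ ≤ ∑ k, w k := Finset.sum_le_sum fun k _ => by
            rw [abs_mul, abs_of_nonneg (hw k)]
            exact mul_le_of_le_one_right (hw k) (hg k x)
        _ = 1 := hw1
    refine (Finset.abs_sum_le_sum_abs _ _).trans ?_
    calc ∑ j, |g (κ j) x - ∑ k, w k * g k x| ≤ ∑ j : Fin m, (2:ℝ) :=
          Finset.sum_le_sum fun j _ => (abs_sub _ _).trans (by linarith [hg (κ j) x])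
      _ = m * 2 := by simp
  have hint : ∀ l : ℝ, Integrable (fun x => Real.exp (l * S x)) ν := by
    intro l
    refine Integrable.of_bound (C := Real.exp (|l| * (m * 2)))
      (Real.measurable_exp.comp (hSm.const_mul _)).aestronglyMeasurable ?_
    refine Filter.Eventually.of_forall fun x => ?_
    rw [Real.norm_eq_abs, Real.abs_exp, Real.exp_le_exp]
    refine (le_abs_self _).trans ?_
    rw [abs_mul]
    gcongr
    exact hb x
  have hmk := mul_meas_ge_le_integral_of_nonneg (μ := ν)
    (f := fun x => Real.exp (s/8 * S x) + Real.exp (-(s/8) * S x))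
    (Filter.Eventually.of_forall fun x => by positivity) ((hint _).add (hint _))
    (Real.exp (s/8 * (m * s)))
  have h2 := measureReal_mono (μ := ν) hsub
  have h3 : Real.exp (s/8 * (m * s)) * ν.real {x | s ≤ |(∑ j, g (κ j) x) / m - ∑ k, w k * g k x|}
      ≤ 2 * Real.exp (4 * (s/8) ^ 2) ^ m * ν.real Set.univ :=
    (mul_le_mul_of_nonneg_left h2 (Real.exp_pos _).le).trans (hmk.trans hκ)
  rw [← Real.exp_nat_mul] at h3
  have h4 : Real.exp (m * (4 * (s/8)^2)) = Real.exp (s/8 * (m*s)) * Real.exp (-(m * s^2/16)) := by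
    rw [← Real.exp_add]
    congr 1
    ring
  rw [h4] at h3
  have h5 := Real.exp_pos (s/8 * (m * s))
  refine le_of_mul_le_mul_left (h3.trans (le_of_eq ?_)) h5
  ring

lemma one_level {Ω ι : Type*} [MeasurableSpace Ω] (μ : Measure Ω) [IsProbabilityMeasure μ]
    (C : Set Ω) (hC : μ Cᶜ = 0)
    [Fintype ι] (g : ι → Ω → ℝ) (hgm : ∀ i, Measurable (g i)) (hg : ∀ i x, |g i x| ≤ 1)
    (R : ℝ) (hR : (Fintype.card ι : ℝ) ≤ Real.exp R) (t q : ℝ) (ht : 0 < t) (ht4 : t ≤ 4)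
    (hq : 0 < q) (hq1 : q ≤ 1) (m n : ℕ) (hm : 0 < m) (hn : 0 < n)
    (hmq : 4 * Real.exp (-(m * t ^ 2 / 256)) ≤ q / 4) (hnq : m * R < n * q / 5) :
    ∃ x : Fin n → Ω, (∀ i, x i ∈ C) ∧ ∀ w : ι → ℝ, (∀ i, 0 ≤ w i) → ∑ i, w i = 1 →
      q < μ.real {y | t ≤ |∑ k, w k * g k y|} → ∃ i, t / 2 < |∑ k, w k * g k (x i)| := by
  classical
  let P : (Fin m → ι) → Ω → ℝ := fun κ y => (∑ j, g (κ j) y) / m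
  have hPm : ∀ κ, Measurable (P κ) := fun κ =>
    (Finset.measurable_fun_sum _ fun j _ => hgm _).div_const _
  let A : (Fin m → ι) → Set Ω := fun κ => {y | 3 * t / 4 < |P κ y|}
  have hAm : ∀ κ, MeasurableSet (A κ) := fun κ =>
    measurableSet_lt measurable_const (continuous_abs.measurable.comp (hPm κ))
  let J := {κ : Fin m → ι // 3 * q / 4 ≤ μ.real (A κ)}
  obtain ⟨x, hxC, hx⟩ := select_points μ C hC (fun j : J => A j.1) (fun j => hAm _) (3 * q / 4)
    (fun j => j.2) (fun _ => 1) (fun _ => zero_le_one) n (by linarith)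
  refine ⟨x, hxC, ?_⟩
  have hn' : (0:ℝ) < n := by exact_mod_cast hn
  have hm' : (0:ℝ) < m := by exact_mod_cast hm
  -- counts
  have hcount : ∀ j : J, n * q / 4 < (#{i | x i ∈ A j.1} : ℝ) := by
    intro j
    have h1 : ∏ i, (1 - (A j.1).indicator (fun _ => (1/2 : ℝ)) (x i)) =
        (1/2 : ℝ) ^ (#{i | x i ∈ A j.1}) := by
      have : ∀ i, (1 - (A j.1).indicator (fun _ => (1/2 : ℝ)) (x i)) =
          if x i ∈ A j.1 then (1/2 : ℝ) else 1 := by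
        intro i
        by_cases h : x i ∈ A j.1 <;> simp [h]
        norm_num
      simp only [this, Finset.prod_ite, Finset.prod_const_one, mul_one, Finset.prod_const]
    have hnn : ∀ j : J, 0 ≤ 1 * ∏ i, (1 - (A j.1).indicator (fun _ => (1/2 : ℝ)) (x i)) := by
      intro j
      rw [one_mul]
      refine Finset.prod_nonneg fun i _ => ?_
      by_cases h : x i ∈ A j.1 <;> simp [h]
      norm_num
    have h2 := Finset.single_le_sum (fun j _ => hnn j) (Finset.mem_univ j)
    rw [one_mul, h1] at h2
    have h3 := h2.trans hx
    have hcard : ∑ _j : J, (1:ℝ) ≤ Real.exp (m * R) := by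
      simp only [Finset.sum_const, nsmul_eq_mul, mul_one, Finset.card_univ]
      calc (Fintype.card J : ℝ) ≤ (Fintype.card (Fin m → ι) : ℝ) := by
            exact_mod_cast Fintype.card_subtype_le _
        _ = (Fintype.card ι : ℝ) ^ m := by simp
        _ ≤ Real.exp R ^ m := by gcongr
        _ = Real.exp (m * R) := by rw [← Real.exp_nat_mul]
    have h4 : (1 - 3 * q / 4 / 2) ^ n ≤ Real.exp (-(3 * q / 8 * n)) := by
      calc (1 - 3 * q / 4 / 2) ^ n ≤ Real.exp (-(3 * q / 8)) ^ n := by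
            refine pow_le_pow_left₀ (by linarith) ?_ _
            linarith [Real.add_one_le_exp (-(3 * q / 8))]
        _ = _ := by rw [← Real.exp_nat_mul]; congr 1; ring
    have h5 : (1/2 : ℝ) ^ (#{i | x i ∈ A j.1}) ≤ Real.exp (-(3 * q / 8 * n) + m * R) := by
      rw [Real.exp_add]
      refine h3.trans ?_
      gcongr
    have h6 : (1/2 : ℝ) ^ (#{i | x i ∈ A j.1}) =
        Real.exp (-(Real.log 2 * (#{i | x i ∈ A j.1} : ℝ))) := by
      rw [one_div, inv_pow, Real.exp_neg, mul_comm (Real.log 2), Real.exp_nat_mul,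
        Real.exp_log (by norm_num)]
    rw [h6, Real.exp_le_exp] at h5
    have h7 := Real.log_two_lt_d9
    have h8 := Real.log_two_gt_d9
    by_contra! hcon
    have : Real.log 2 * (#{i | x i ∈ A j.1} : ℝ) ≤ 0.7 * (n * q / 4) := by
      gcongr
      linarith
    nlinarith [mul_pos hn' hq]
  intro w hw hw1 hμ
  let p : Ω → ℝ := fun y => ∑ k, w k * g k y
  have hpm : Measurable p := Finset.measurable_fun_sum _ fun k _ => (hgm k).const_mul _
  let ν : Measure Ω := μ + ∑ i, ENNReal.ofReal (1 / n) • Measure.dirac (x i)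
  have hν : ∀ E, MeasurableSet E → ν.real E = μ.real E + (#{i | x i ∈ E} : ℝ) / n := by
    intro E hE
    have : ν E = μ E + ∑ i, ENNReal.ofReal (1 / n) * Set.indicator E 1 (x i) := by
      simp [ν, Measure.dirac_apply' _ hE]
    rw [Measure.real, this, ENNReal.toReal_add (measure_ne_top _ _), ENNReal.toReal_sum]
    · congr 1
      have : ∀ i, (ENNReal.ofReal (1 / n) * Set.indicator E 1 (x i)).toReal =
          if x i ∈ E then (1 / n : ℝ) else 0 := by
        intro i
        by_cases h : x i ∈ E <;> simp [h]
      simp only [this, ← Finset.sum_filter, Finset.sum_const, nsmul_eq_mul]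
      ring
    · intro i _
      by_cases h : x i ∈ E <;> simp [h]
    · refine (ENNReal.sum_lt_top.2 fun i _ => ?_).ne
      by_cases h : x i ∈ E <;> simp [h]
  have hfin : IsFiniteMeasure ν := by
    constructor
    simp [ν, ENNReal.mul_lt_top_iff]
  obtain ⟨κ, hκ⟩ := maurey ν g hgm hg w hw hw1 (t / 4) (by positivity) (by linarith) m hm
  have hEm : MeasurableSet {y | t / 4 ≤ |P κ y - p y|} :=
    measurableSet_le measurable_const (continuous_abs.measurable.comp ((hPm κ).sub hpm))
  have hκ2 : ν.real {y | t / 4 ≤ |P κ y - p y|} ≤ q / 4 := by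
    refine le_trans hκ ?_
    rw [hν _ MeasurableSet.univ]
    have e1 : (m * (t/4) ^ 2 / 16 : ℝ) = m * t ^ 2 / 256 := by ring
    rw [e1]
    simp
    rw [div_self hn'.ne']
    linarith
  rw [hν _ hEm] at hκ2
  have hc0 : 0 ≤ (#{i | x i ∈ {y | t / 4 ≤ |P κ y - p y|}} : ℝ) / n := by positivity
  have hA : 3 * q / 4 ≤ μ.real (A κ) := by
    have hsub : {y | t ≤ |p y|} ⊆ A κ ∪ {y | t / 4 ≤ |P κ y - p y|} := by
      intro y hy
      by_contra hcon
      have hy' : t ≤ |p y| := hy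
      have h1 : ¬ (3 * t / 4 < |P κ y|) := fun h => hcon (Or.inl h)
      have h2 : ¬ (t / 4 ≤ |P κ y - p y|) := fun h => hcon (Or.inr h)
      have h3 := abs_sub_abs_le_abs_sub (p y) (P κ y)
      rw [abs_sub_comm] at h3
      linarith
    have h1 := measureReal_mono (μ := μ) hsub
    have h2 := measureReal_union_le (μ := μ) (A κ) {y | t / 4 ≤ |P κ y - p y|}
    have h3 : q < μ.real {y | t ≤ |p y|} := hμ
    linarith
  have hc := hcount ⟨κ, hA⟩
  have hc2 : (#{i | x i ∈ {y | t / 4 ≤ |P κ y - p y|}} : ℝ) ≤ n * q / 4 := by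
    have : (#{i | x i ∈ {y | t / 4 ≤ |P κ y - p y|}} : ℝ) / n ≤ q / 4 := by
      linarith [measureReal_nonneg (μ := μ) (s := {y | t / 4 ≤ |P κ y - p y|})]
    rw [div_le_iff₀ hn'] at this
    linarith
  have hlt : #{i | x i ∈ {y | t / 4 ≤ |P κ y - p y|}} < #{i | x i ∈ A κ} := by
    exact_mod_cast hc2.trans_lt hc
  obtain ⟨i, hi1, hi2⟩ := Finset.exists_mem_notMem_of_card_lt_card hlt
  refine ⟨i, ?_⟩
  simp only [Finset.mem_filter, Finset.mem_univ, true_and] at hi1 hi2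
  have h1 : 3 * t / 4 < |P κ (x i)| := hi1
  have h2 : ¬ (t / 4 ≤ |P κ (x i) - p (x i)|) := hi2
  have h3 := abs_sub_abs_le_abs_sub (P κ (x i)) (p (x i))
  change t / 2 < |p (x i)|
  linarith

lemma dyadic_pt (η v : ℝ) (hη : 0 < η) (L : ℕ) (hv : |v| < 2 ^ L * (η / 2)) :
    v ^ 2 ≤ η ^ 2 / 4 + ∑ j : Fin L,
      4 * (2 ^ (j:ℕ) * (η / 2)) ^ 2 * (if 2 ^ (j:ℕ) * (η / 2) ≤ |v| then 1 else 0) := by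
  rw [Fin.sum_univ_eq_sum_range (fun j : ℕ => 4 * (2 ^ j * (η / 2)) ^ 2 *
    (if 2 ^ j * (η / 2) ≤ |v| then (1:ℝ) else 0))]
  induction L with
  | zero =>
    simp at hv ⊢
    rw [← sq_abs]
    nlinarith [abs_nonneg v]
  | succ L ih =>
    rw [Finset.sum_range_succ]
    by_cases h : |v| < 2 ^ L * (η / 2)
    · have := ih h
      rw [if_neg (not_le.2 h)]
      linarith
    · rw [if_pos (not_lt.1 h)]
      have h1 : 0 ≤ ∑ j ∈ Finset.range L, 4 * (2 ^ j * (η / 2)) ^ 2 *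
        (if 2 ^ j * (η / 2) ≤ |v| then (1:ℝ) else 0) :=
        Finset.sum_nonneg fun j _ => by split_ifs <;> positivity
      have h2 : v ^ 2 ≤ 4 * (2 ^ L * (η / 2)) ^ 2 := by
        rw [← sq_abs]
        rw [pow_succ] at hv
        nlinarith [abs_nonneg v]
      nlinarith [sq_nonneg η]

lemma multi_level {Ω ι : Type*} [MeasurableSpace Ω] (μ : Measure Ω) [IsProbabilityMeasure μ]
    (C : Set Ω) (hC : μ Cᶜ = 0)
    [Fintype ι] (g : ι → Ω → ℝ) (hgm : ∀ i, Measurable (g i)) (hg : ∀ i x, |g i x| ≤ 1)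
    (R : ℝ) (hR0 : 0 ≤ R) (hR : (Fintype.card ι : ℝ) ≤ Real.exp R) (η : ℝ) (hη : 0 < η)
    (L : ℕ) (hL1 : 1 ≤ L) (hL2 : 2 < 2 ^ L * η) (hL3 : 2 ^ L * η ≤ 8) (n : ℕ)
    (hn : 61600 * L ^ 2 * R / η ^ 2 < n) :
    ∃ x : Fin L → Fin n → Ω, (∀ j i, x j i ∈ C) ∧ ∀ w : ι → ℝ, (∀ i, 0 ≤ w i) → ∑ i, w i = 1 →
      (∀ j i, |∑ k, w k * g k (x j i)| ≤ η / 8) → ∫ y, (∑ k, w k * g k y) ^ 2 ∂μ ≤ η ^ 2 := by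
  have hL' : (1:ℝ) ≤ L := by exact_mod_cast hL1
  have hnpos : (0:ℝ) < n := lt_of_le_of_lt (by positivity) hn
  let t : Fin L → ℝ := fun j => 2 ^ (j:ℕ) * (η / 2)
  let q : Fin L → ℝ := fun j => η ^ 2 / (8 * L * t j ^ 2)
  have ht0 : ∀ j, 0 < t j := fun j => by positivity
  have htη : ∀ j, η / 2 ≤ t j := fun j => by
    have : (1:ℝ) ≤ 2 ^ (j:ℕ) := one_le_pow₀ (by norm_num)
    simp only [t]; nlinarith
  have htL : ∀ j, t j ≤ 2 ^ L * η / 4 := fun j => by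
    have : (2:ℝ) ^ ((j:ℕ) + 1) ≤ 2 ^ L := pow_le_pow_right₀ (by norm_num) j.2
    rw [pow_succ] at this
    simp only [t]; nlinarith
  have hq0 : ∀ j, 0 < q j := fun j => by
    have := ht0 j
    simp only [q]
    positivity
  have key : ∀ j, ∃ x : Fin n → Ω, (∀ i, x i ∈ C) ∧ ∀ w : ι → ℝ, (∀ i, 0 ≤ w i) → ∑ i, w i = 1 →
      q j < μ.real {y | t j ≤ |∑ k, w k * g k y|} → ∃ i, t j / 2 < |∑ k, w k * g k (x i)| := by
    intro j
    have h0 := ht0 j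
    have hm1 : (1536 * L / t j ^ 2 : ℝ) ≤ ⌈(1536 * L / t j ^ 2 : ℝ)⌉₊ := Nat.le_ceil _
    have hm2 : (⌈(1536 * L / t j ^ 2 : ℝ)⌉₊ : ℝ) < 1536 * L / t j ^ 2 + 1 :=
      Nat.ceil_lt_add_one (by positivity)
    have hmp : 0 < ⌈(1536 * L / t j ^ 2 : ℝ)⌉₊ := Nat.ceil_pos.2 (by positivity)
    set m := ⌈(1536 * L / t j ^ 2 : ℝ)⌉₊ with hm
    refine one_level μ C hC g hgm hg R hR (t j) (q j) h0 (by linarith [htL j]) (hq0 j) ?_ m n hmp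
      (by exact_mod_cast hnpos) ?_ ?_
    · rw [div_le_one (by positivity)]
      nlinarith [htη j, sq_nonneg (t j)]
    · have h1 : (6 * L : ℝ) ≤ m * t j ^ 2 / 256 := by
        rw [div_le_iff₀ (by positivity)] at hm1
        linarith
      have h2 : Real.exp (-(m * t j ^ 2 / 256)) ≤ Real.exp (-(6 * L)) :=
        Real.exp_le_exp.2 (by linarith)
      have h3 : 2 ^ (6 * L) ≤ Real.exp (6 * L) := by
        have : (2:ℝ) ≤ Real.exp 1 := by linarith [Real.add_one_le_exp (1:ℝ)]
        calc (2:ℝ) ^ (6 * L) ≤ Real.exp 1 ^ (6 * L) := by gcongr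
          _ = Real.exp (6 * L) := by rw [← Real.exp_nat_mul]; simp
      have h4 : (L:ℝ) ≤ 2 ^ L := by exact_mod_cast (Nat.lt_two_pow_self (n := L)).le
      have h5 : (2:ℝ) ≤ 2 ^ L := by
        calc (2:ℝ) = 2 ^ 1 := by norm_num
          _ ≤ 2 ^ L := pow_le_pow_right₀ (by norm_num) hL1
      have h6 : 16 / q j ≤ 2 ^ (6 * L) := by
        have : 16 / q j = 128 * L * t j ^ 2 / η ^ 2 := by
          simp only [q]; field_simp; norm_num
        rw [this, div_le_iff₀ (by positivity)]
        calc 128 * L * t j ^ 2 ≤ 128 * (2 ^ L) * (2 ^ L * η / 4) ^ 2 := by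
              gcongr; exact htL j
          _ = 2 ^ 3 * 2 ^ L * 2 ^ L * 2 ^ L * η ^ 2 := by ring
          _ ≤ (2 ^ L) ^ 3 * 2 ^ L * 2 ^ L * 2 ^ L * η ^ 2 := by gcongr
          _ = _ := by ring
      have h7 : Real.exp (-(6 * L)) ≤ q j / 16 := by
        rw [Real.exp_neg]
        have : 16 / q j ≤ Real.exp (6 * L) := h6.trans h3
        calc (Real.exp (6 * L))⁻¹ ≤ (16 / q j)⁻¹ := by
              apply inv_anti₀ _ this
              have := hq0 j; positivity
          _ = _ := by rw [inv_div]
      linarith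
    · have h1 : (m : ℝ) ≤ 1540 * L / t j ^ 2 := by
        have : (1:ℝ) ≤ 4 * L / t j ^ 2 := by
          rw [le_div_iff₀ (by positivity)]
          nlinarith [htL j]
        have e : (1540 * L / t j ^ 2 : ℝ) = 1536 * L / t j ^ 2 + 4 * L / t j ^ 2 := by ring
        linarith
      have h2 : m * R ≤ (61600 * L ^ 2 * R / η ^ 2) * q j / 5 := by
        calc m * R ≤ 1540 * L / t j ^ 2 * R := by gcongr
          _ = _ := by simp only [q]; field_simp; ring
      refine h2.trans_lt ?_
      have := hq0 j
      gcongr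
  choose x hxC hx using key
  refine ⟨x, hxC, ?_⟩
  intro w hw hw1 hsmall
  let p : Ω → ℝ := fun y => ∑ k, w k * g k y
  have hpm : Measurable p := Finset.measurable_fun_sum _ fun k _ => (hgm k).const_mul _
  have hp1 : ∀ y, |p y| ≤ 1 := by
    intro x
    calc |∑ k, w k * g k x| ≤ ∑ k, |w k * g k x| := Finset.abs_sum_le_sum_abs _ _
      _ ≤ ∑ k, w k := Finset.sum_le_sum fun k _ => by
          rw [abs_mul, abs_of_nonneg (hw k)]
          exact mul_le_of_le_one_right (hw k) (hg k x)
      _ = 1 := hw1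
  have hmeas : ∀ j, μ.real {y | t j ≤ |p y|} ≤ q j := by
    intro j
    by_contra! hcon
    obtain ⟨i, hi⟩ := hx j w hw hw1 hcon
    have := hsmall j i
    linarith [htη j]
  have hEm : ∀ j, MeasurableSet {y | t j ≤ |p y|} := fun j =>
    measurableSet_le measurable_const (continuous_abs.measurable.comp hpm)
  have hintj : ∀ j, Integrable (fun y => 4 * t j ^ 2 * ({y | t j ≤ |p y|}.indicator (fun _ => (1:ℝ)) y)) μ :=
    fun j => ((integrable_const _).indicator (hEm j)).const_mul _
  calc ∫ y, (p y) ^ 2 ∂μ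
      ≤ ∫ y, (η ^ 2 / 4 + ∑ j : Fin L, 4 * t j ^ 2 * ({y | t j ≤ |p y|}.indicator (fun _ => (1:ℝ)) y)) ∂μ := by
        refine integral_mono ?_ ((integrable_const _).add (integrable_finsetSum _ fun j _ => hintj j)) fun y => ?_
        · refine Integrable.of_bound (C := 1) (hpm.pow_const 2).aestronglyMeasurable ?_
          refine Filter.Eventually.of_forall fun y => ?_
          rw [Real.norm_eq_abs, abs_pow]
          exact pow_le_one₀ (abs_nonneg _) (hp1 y)
        · have := dyadic_pt η (p y) hη L (by linarith [hp1 y])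
          simpa only [Set.indicator_apply, Set.mem_ofPred_eq] using this
    _ = η ^ 2 / 4 + ∑ j : Fin L, 4 * t j ^ 2 * μ.real {y | t j ≤ |p y|} := by
        rw [integral_add (integrable_const _) (integrable_finsetSum _ fun j _ => hintj j),
          integral_finsetSum _ fun j _ => hintj j]
        congr 1
        · simp
        · refine Finset.sum_congr rfl fun j _ => ?_
          rw [integral_const_mul, integral_indicator_const _ (hEm j)]
          simp
    _ ≤ η ^ 2 / 4 + ∑ j : Fin L, η ^ 2 / (2 * L) := by
        gcongr with j
        calc 4 * t j ^ 2 * μ.real {y | t j ≤ |p y|} ≤ 4 * t j ^ 2 * q j := by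
              gcongr; exact hmeas j
          _ = _ := by
              have := ht0 j
              simp only [q]; field_simp; norm_num
    _ = η ^ 2 / 4 + η ^ 2 / 2 := by
        simp; field_simp
    _ ≤ η ^ 2 := by nlinarith [sq_nonneg η]

/-- The frequency box. -/
def fbox (d : ℕ) (M : ℕ) : Finset (Fin d → ℤ) :=
  Fintype.piFinset fun _ => Finset.Icc (-(M:ℤ)) M

/-- The dictionary. -/
def dict (d M : ℕ) : Option (fbox d M × Fin 4) → (Fin d → ℝ) → ℝ
  | none, _ => 0
  | some (k, r), y => (Complex.I ^ (r : ℕ) * eK d k.1 y).re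

lemma eK_norm (d : ℕ) (k : Fin d → ℤ) (y : Fin d → ℝ) : ‖eK d k y‖ = 1 := by
  unfold eK
  have : 2 * (Real.pi : ℂ) * Complex.I * ∑ i, (k i : ℂ) * (y i : ℂ) =
      ((2 * Real.pi * ∑ i, (k i : ℝ) * y i : ℝ) : ℂ) * Complex.I := by
    push_cast; ring
  rw [this, Complex.norm_exp_ofReal_mul_I]

lemma eK_cont (d : ℕ) (k : Fin d → ℤ) : Continuous (eK d k) := by
  unfold eK
  fun_prop

lemma dict_meas (d M : ℕ) (i) : Measurable (dict d M i) := by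
  rcases i with _ | ⟨k, r⟩
  · exact measurable_const
  · have : Continuous (dict d M (some (k, r))) :=
      Complex.continuous_re.comp (continuous_const.mul (eK_cont d k.1))
    exact this.measurable

lemma dict_bd (d M : ℕ) (i y) : |dict d M i y| ≤ 1 := by
  rcases i with _ | ⟨k, r⟩
  · simp [dict]
  · refine (Complex.abs_re_le_norm _).trans ?_
    simp [eK_norm]

lemma weight_large (d M : ℕ) (B : ℝ) (hM : Real.exp B ≤ M) (k : Fin d → ℤ) (hk : k ∉ fbox d M) :
    B ≤ logWeight d k := by
  refine le_trans ?_ (le_max_right _ _)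
  have hex : ∃ i, M < (k i).natAbs := by
    by_contra! h
    apply hk
    simp only [fbox, Fintype.mem_piFinset, Finset.mem_Icc]
    intro i
    have := h i
    omega
  obtain ⟨i, hi⟩ := hex
  have h1 : (k i).natAbs ≤ Finset.univ.sup fun i => (k i).natAbs :=
    Finset.le_sup (f := fun i => (k i).natAbs) (Finset.mem_univ i)
  have h2 : (M : ℝ) ≤ ((Finset.univ.sup fun i => (k i).natAbs : ℕ) : ℝ) := by
    exact_mod_cast hi.le.trans h1
  rw [Real.le_log_iff_exp_le (lt_of_lt_of_le (Real.exp_pos _) (hM.trans h2))]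
  exact hM.trans h2

lemma rep (d M : ℕ) (B : ℝ) (hB : 0 < B) (hM : Real.exp B ≤ M) (c : (Fin d → ℤ) → ℂ)
    (u : (Fin d → ℝ) → ℝ) (hu : ∀ y, HasSum (fun k => (c k * eK d k y).re) (u y))
    (hs : Summable fun k => ‖c k‖ * logWeight d k) (hs2 : ∑' k, ‖c k‖ * logWeight d k ≤ 2) :
    ∃ w : Option (fbox d M × Fin 4) → ℝ, (∀ i, 0 ≤ w i) ∧ ∑ i, w i = 1 ∧
      ∀ y, |u y / 4 - ∑ i, w i * dict d M i y| ≤ 1 / (2 * B) := by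
  have hW1 : ∀ k, 1 ≤ logWeight d k := fun k => le_max_left _ _
  have hnn : ∀ k, 0 ≤ ‖c k‖ * logWeight d k := fun k =>
    mul_nonneg (norm_nonneg _) (zero_le_one.trans (hW1 k))
  let v : fbox d M × Fin 4 → ℝ := fun z =>
    (![max (c z.1).re 0, max (c z.1).im 0, max (-(c z.1).re) 0, max (-(c z.1).im) 0] z.2) / 4
  have hv : ∀ z, 0 ≤ v z := by
    rintro ⟨k, r⟩
    fin_cases r <;> simp [v] <;> positivity
  have hvsum : ∑ z, v z ≤ 1 := by
    rw [Fintype.sum_prod_type]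
    calc ∑ k : fbox d M, ∑ r, v (k, r) ≤ ∑ k : fbox d M, (1/2) * (‖c k‖ * logWeight d k) := by
          refine Finset.sum_le_sum fun k _ => ?_
          have h1 := Complex.abs_re_le_norm (c k)
          have h2 := Complex.abs_im_le_norm (c k)
          have h3 : ‖c k‖ ≤ ‖c k‖ * logWeight d k := le_mul_of_one_le_right (norm_nonneg _) (hW1 _)
          have h4 : ∑ r, v (k, r) = (|(c k).re| + |(c k).im|) / 4 := by
            simp only [Fin.sum_univ_four, v]
            simp
            rcases le_total 0 (c k).re with ha | ha <;> rcases le_total 0 (c k).im with hb | hb <;>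
              simp [ha, hb, abs_of_nonneg, abs_of_nonpos] <;> ring
          rw [h4]
          linarith
      _ = (1/2) * ∑ k ∈ fbox d M, (‖c k‖ * logWeight d k) := by
          rw [← Finset.mul_sum, Finset.sum_coe_sort (fbox d M) (fun k => ‖c k‖ * logWeight d k)]
      _ ≤ (1/2) * 2 := by
          gcongr
          exact (hs.sum_le_tsum _ fun k _ => hnn k).trans hs2
      _ = 1 := by norm_num
  refine ⟨fun i => i.elim (1 - ∑ z, v z) v, ?_, ?_, ?_⟩
  · rintro (_ | z)
    · simpa using hvsum
    · exact hv z
  · rw [Fintype.sum_option]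
    simp only [Option.elim_none, Option.elim_some]
    ring
  · intro y
    have h1 : ∑ i : Option (fbox d M × Fin 4), (i.elim (1 - ∑ z, v z) v) * dict d M i y =
        (∑ k ∈ fbox d M, (c k * eK d k y).re) / 4 := by
      rw [Fintype.sum_option,
        ← Finset.sum_coe_sort (fbox d M) (fun k => (c k * eK d k y).re), Finset.sum_div]
      simp only [dict, mul_zero, zero_add, Option.elim_some]
      rw [Fintype.sum_prod_type]
      apply Finset.sum_congr rfl
      intro k _
      simp only [Fin.sum_univ_four, v]
      simp [pow_succ, Complex.mul_re]
      rcases le_total 0 (c k).re with ha | ha <;> rcases le_total 0 (c k).im with hb | hb <;>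
              simp [ha, hb] <;> ring
    rw [h1, ← sub_div, abs_div]
    have h2 : HasSum (fun k => (c k * eK d k y).re -
        (if k ∈ fbox d M then (c k * eK d k y).re else 0))
        (u y - ∑ k ∈ fbox d M, (c k * eK d k y).re) := by
      have h0 : HasSum (fun k => if k ∈ fbox d M then (c k * eK d k y).re else (0:ℝ))
          (∑ k ∈ fbox d M, if k ∈ fbox d M then (c k * eK d k y).re else (0:ℝ)) :=
        hasSum_sum_of_ne_finset_zero (fun k hk => by simp [hk])
      have h0' : (∑ k ∈ fbox d M, if k ∈ fbox d M then (c k * eK d k y).re else (0:ℝ)) =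
          ∑ k ∈ fbox d M, (c k * eK d k y).re :=
        Finset.sum_congr rfl fun k hk => by rw [if_pos hk]
      rw [h0'] at h0
      exact (hu y).sub h0
    have h3 := tsum_of_norm_bounded (f := fun k => (c k * eK d k y).re -
        (if k ∈ fbox d M then (c k * eK d k y).re else 0)) (hs.hasSum.div_const B) (by
      intro k
      by_cases hk : k ∈ fbox d M
      · simp only [hk, if_true, sub_self, norm_zero]
        exact div_nonneg (hnn k) hB.le
      · simp only [hk, if_false, sub_zero, Real.norm_eq_abs]
        rw [le_div_iff₀ hB]
        refine mul_le_mul ?_ (weight_large d M B hM k hk) hB.le (norm_nonneg _)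
        refine (Complex.abs_re_le_norm _).trans ?_
        simp [eK_norm])
    rw [h2.tsum_eq, Real.norm_eq_abs] at h3
    have h4 : (∑' k, ‖c k‖ * logWeight d k) / B ≤ 2 / B := by gcongr
    rw [div_le_iff₀ (by simp)]
    refine (h3.trans h4).trans (le_of_eq ?_)
    simp
    field_simp
    norm_num

lemma cube_prob (d : ℕ) : IsProbabilityMeasure (volume.restrict (cube d)) := by
  constructor
  rw [Measure.restrict_apply_univ, cube, volume_pi_pi]
  simp

lemma card_dict (d M : ℕ) : Fintype.card (Option (fbox d M × Fin 4)) = (2 * M + 1) ^ d * 4 + 1 := by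
  have : (M + 1 + M : ℤ).toNat = 2 * M + 1 := by omega
  rw [Fintype.card_option, Fintype.card_prod, Fintype.card_coe, fbox, Fintype.card_piFinset]
  simp [this]

lemma int_sq_bound (d M : ℕ) (η : ℝ) (u : (Fin d → ℝ) → ℝ)
    (w : Option (fbox d M × Fin 4) → ℝ)
    (hy : ∀ y, |u y / 4 - ∑ i, w i * dict d M i y| ≤ η / 8)
    (hp : ∫ y in cube d, (∑ i, w i * dict d M i y) ^ 2 ≤ η ^ 2) :
    ∫ y in cube d, u y ^ 2 ≤ 64 * η ^ 2 := by
  have := cube_prob d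
  have hpm : Measurable fun y => ∑ i, w i * dict d M i y :=
    Finset.measurable_fun_sum _ fun k _ => (dict_meas d M k).const_mul _
  have hint : Integrable (fun y => (∑ i, w i * dict d M i y) ^ 2) (volume.restrict (cube d)) := by
    refine Integrable.of_bound (C := (∑ i, |w i|) ^ 2) (hpm.pow_const 2).aestronglyMeasurable ?_
    refine Filter.Eventually.of_forall fun y => ?_
    rw [Real.norm_eq_abs, abs_pow]
    gcongr
    refine (Finset.abs_sum_le_sum_abs _ _).trans (Finset.sum_le_sum fun i _ => ?_)
    rw [abs_mul]
    exact mul_le_of_le_one_right (abs_nonneg _) (dict_bd d M i y)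
  calc ∫ y in cube d, u y ^ 2
      ≤ ∫ y in cube d, (32 * (∑ i, w i * dict d M i y) ^ 2 + 32 * η ^ 2) := by
        refine integral_mono_of_nonneg (Filter.Eventually.of_forall fun y => sq_nonneg _)
          ((hint.const_mul 32).add (integrable_const _)) (Filter.Eventually.of_forall fun y => ?_)
        have h := sq_le_sq' (abs_le.1 (hy y)).1 (abs_le.1 (hy y)).2
        have h2 := sq_nonneg (u y / 4 - 2 * ∑ i, w i * dict d M i y)
        simp only
        nlinarith [sq_nonneg η]
    _ = 32 * (∫ y in cube d, (∑ i, w i * dict d M i y) ^ 2) + 32 * η ^ 2 := by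
        rw [integral_add (hint.const_mul 32) (integrable_const _), integral_const_mul]
        simp
    _ ≤ 64 * η ^ 2 := by linarith

lemma summable_coeff {d : ℕ} {f : (Fin d → ℝ) → ℂ}
    (hs : Summable (fun k : Fin d → ℤ => ‖fCoeff d f k‖ * logWeight d k)) :
    Summable (fun k => ‖fCoeff d f k‖) :=
  hs.of_nonneg_of_le (fun _ => norm_nonneg _) fun _ =>
    le_mul_of_one_le_right (norm_nonneg _) (le_max_left _ _)

lemma main_pts (d : ℕ) (ε : ℝ) (hd : 1 ≤ d) (hε : 0 < ε) (hε1 : ε < 1/2) (L : ℕ) (hL1 : 1 ≤ L)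
    (hL2 : 2 < 2 ^ L * (ε/16)) (hL3 : 2 ^ L * (ε/16) ≤ 8) (n : ℕ)
    (hn : 61600 * L ^ 2 * (68 * d / ε) / (ε/16) ^ 2 < n) :
    ∃ x : Fin L → Fin n → (Fin d → ℝ), (∀ j i, x j i ∈ cube d) ∧
      ∀ f ∈ FdLog d, ∀ g ∈ FdLog d, (∀ j i, f (x j i) = g (x j i)) →
        eLpNorm (fun t => f t - g t) 2 (volume.restrict (cube d)) ≤ ENNReal.ofReal ε := by
  have := cube_prob d
  have hd' : (1:ℝ) ≤ d := by exact_mod_cast hd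
  have hcube : MeasurableSet (cube d) := MeasurableSet.univ_pi fun _ => measurableSet_Icc
  set M := ⌈Real.exp (64/ε)⌉₊ with hM
  have hM1 : Real.exp (64/ε) ≤ M := Nat.le_ceil _
  have hM2 : (M:ℝ) < Real.exp (64/ε) + 1 := Nat.ceil_lt_add_one (Real.exp_pos _).le
  have hεi : 2 ≤ 1/ε := by rw [le_div_iff₀ hε]; linarith
  have hcard : (Fintype.card (Option (fbox d M × Fin 4)) : ℝ) ≤ Real.exp (68 * d / ε) := by
    rw [card_dict]
    push_cast
    have h1 : (1:ℝ) ≤ Real.exp (64/ε) := Real.one_le_exp (by positivity)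
    have h5 : (5:ℝ) ≤ Real.exp 2 := by
      have : Real.exp 2 = Real.exp 1 * Real.exp 1 := by rw [← Real.exp_add]; norm_num
      nlinarith [Real.exp_one_gt_d9]
    have h6 : Real.exp 2 ≤ Real.exp (1/ε) := Real.exp_le_exp.2 hεi
    have h2 : (2 * M + 1 : ℝ) ≤ Real.exp (65/ε) := by
      have e : Real.exp (65/ε) = Real.exp (1/ε) * Real.exp (64/ε) := by
        rw [← Real.exp_add]; congr 1; ring
      rw [e]
      nlinarith
    have h3 : (1:ℝ) ≤ (2 * M + 1 : ℝ) ^ d := one_le_pow₀ (by linarith [Nat.cast_nonneg (α := ℝ) M])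
    calc (2 * M + 1 : ℝ) ^ d * 4 + 1 ≤ 5 * (2 * M + 1 : ℝ) ^ d := by linarith
      _ ≤ Real.exp (1/ε) * Real.exp (65/ε) ^ d := by gcongr; linarith
      _ = Real.exp (1/ε + d * (65/ε)) := by rw [Real.exp_add, Real.exp_nat_mul]
      _ ≤ Real.exp (68 * d / ε) := by
          apply Real.exp_le_exp.2
          have : 1 / ε ≤ d * (1/ε) := le_mul_of_one_le_left (by positivity) hd'
          have e : 68 * d / ε = d * (1/ε) + d * (65/ε) + 2 * (d / ε) := by ring
          have : 0 ≤ d/ε := by positivity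
          rw [e]; linarith
  obtain ⟨x, hx, hxp⟩ := multi_level (volume.restrict (cube d)) (cube d)
    (by rw [Measure.restrict_apply hcube.compl]; simp) (dict d M) (dict_meas d M) (dict_bd d M)
    (68 * d / ε) (by positivity) hcard (ε/16) (by positivity) L hL1 hL2 hL3 n hn
  refine ⟨x, hx, ?_⟩
  rintro f ⟨hfc, hfp, hfs, hf1⟩ g ⟨hgc, hgp, hgs, hg1⟩ hfg
  have hsum : ∀ y, HasSum (fun k => (fCoeff d f k - fCoeff d g k) * eK d k y) (f y - g y) := by
    intro y
    simp only [sub_mul]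
    exact (hasSum_fourier hfc hfp (summable_coeff hfs) y).sub
      (hasSum_fourier hgc hgp (summable_coeff hgs) y)
  have hB : (0:ℝ) < 64/ε := by positivity
  -- general piece
  have piece : ∀ (a : ℂ), ‖a‖ = 1 → ∫ y in cube d, ((a * (f y - g y)).re) ^ 2 ≤ 64 * (ε/16) ^ 2 := by
    intro a ha
    have hle : ∀ k, ‖a * (fCoeff d f k - fCoeff d g k)‖ * logWeight d k ≤
        ‖fCoeff d f k‖ * logWeight d k + ‖fCoeff d g k‖ * logWeight d k := by
      intro k
      rw [norm_mul, ha, one_mul, ← add_mul]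
      exact mul_le_mul_of_nonneg_right (norm_sub_le _ _) (zero_le_one.trans (le_max_left _ _))
    have hs : Summable fun k => ‖a * (fCoeff d f k - fCoeff d g k)‖ * logWeight d k :=
      (hfs.add hgs).of_nonneg_of_le
        (fun k => mul_nonneg (norm_nonneg _) (zero_le_one.trans (le_max_left _ _))) hle
    have hs2 : ∑' k, ‖a * (fCoeff d f k - fCoeff d g k)‖ * logWeight d k ≤ 2 := by
      refine (hs.tsum_le_tsum hle (hfs.add hgs)).trans ?_
      rw [hfs.tsum_add hgs]
      linarith
    have hu : ∀ y, HasSum (fun k => (a * (fCoeff d f k - fCoeff d g k) * eK d k y).re)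
        ((a * (f y - g y)).re) := by
      intro y
      have := Complex.hasSum_re ((hsum y).mul_left a)
      simpa only [mul_assoc] using this
    obtain ⟨w, hw, hw1, hwy⟩ := rep d M (64/ε) hB hM1 _ _ hu hs hs2
    have e : 1 / (2 * (64/ε)) = ε/16/8 := by field_simp; norm_num
    rw [e] at hwy
    refine int_sq_bound d M (ε/16) _ w hwy (hxp w hw hw1 ?_)
    intro j i
    have := hwy (x j i)
    rw [hfg j i, sub_self, mul_zero, Complex.zero_re, zero_div, zero_sub, abs_neg] at this
    exact this
  have p1 := piece 1 (by simp)
  have p2 := piece (-Complex.I) (by simp)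
  have hcont : Continuous fun y => f y - g y := hfc.sub hgc
  have hcomp : IsCompact (cube d) := isCompact_univ_pi fun _ => isCompact_Icc
  have hi : ∀ F : (Fin d → ℝ) → ℝ, Continuous F → Integrable F (volume.restrict (cube d)) :=
    fun F hF => hF.continuousOn.integrableOn_compact hcomp
  have hint : ∫ y in cube d, ‖f y - g y‖ ^ 2 ≤ ε ^ 2 := by
    have e : ∀ y, ‖f y - g y‖ ^ 2 = ((1 * (f y - g y)).re) ^ 2 + ((-Complex.I * (f y - g y)).re) ^ 2 := by
      intro y
      rw [← Complex.normSq_eq_norm_sq, Complex.normSq_apply]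
      simp
      ring
    simp only [e]
    rw [integral_add (hi _ (by fun_prop)) (hi _ (by fun_prop))]
    nlinarith [sq_nonneg ε]
  have hmem : MemLp (fun y => f y - g y) 2 (volume.restrict (cube d)) := by
    rw [memLp_two_iff_integrable_sq_norm hcont.aestronglyMeasurable]
    exact hi _ (by fun_prop)
  rw [hmem.eLpNorm_eq_integral_rpow_norm (by norm_num) (by norm_num)]
  apply ENNReal.ofReal_le_ofReal
  simp only [ENNReal.toReal_ofNat, Real.rpow_two]
  calc _ ≤ (ε ^ 2) ^ ((2:ℝ)⁻¹) := by
        refine Real.rpow_le_rpow (integral_nonneg fun _ => by positivity) hint (by norm_num)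
    _ = ε := by
        rw [← Real.rpow_natCast, ← Real.rpow_mul hε.le]
        norm_num

/-- Theorem 1 of the paper: there is `c > 0` such that for all `d ∈ ℕ`
(`d ≥ 1`) and `ε ∈ (0, 1/2)`, the complexity of `L₂`-approximation on `F_d^log` satisfies
`n(ε, F_d^log, L₂) ≤ c d ε⁻³ log³(ε⁻¹)`: there are `n` points in the cube and a (possibly
non-linear) recovery map `φ` with worst-case `L₂`-error at most `ε` on `F_d^log`. -/
theorem statement0 :
    ∃ c : ℝ, 0 < c ∧
      ∀ (d : ℕ) (ε : ℝ), 1 ≤ d → ε ∈ Set.Ioo (0 : ℝ) (1/2) →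
        ∃ n : ℕ, (n : ℝ) ≤ c * d * ε⁻¹ ^ 3 * Real.log ε⁻¹ ^ 3 ∧
          ∃ (x : Fin n → (Fin d → ℝ)) (φ : (Fin n → ℂ) → ((Fin d → ℝ) → ℂ)),
            (∀ i, x i ∈ cube d) ∧
            ∀ f ∈ FdLog d,
              eLpNorm (fun t => f t - φ (fun i => f (x i)) t) 2 (volume.restrict (cube d))
                ≤ ENNReal.ofReal ε := by
  refine ⟨11 * (61600 * 11 ^ 2 * 68 * 256 + 11 ^ 2), by norm_num, ?_⟩
  rintro d ε hd ⟨hε, hε1⟩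
  have hd' : (1:ℝ) ≤ d := by exact_mod_cast hd
  have hεi : 2 ≤ ε⁻¹ := by
    rw [inv_eq_one_div, le_div_iff₀ hε]; linarith
  obtain ⟨L, hLa, hLb⟩ := exists_nat_pow_near (x := 64 * ε⁻¹) (y := (2:ℝ)) (by linarith)
    (by norm_num)
  have hεε : ε⁻¹ * ε = 1 := inv_mul_cancel₀ hε.ne'
  set l := Real.log ε⁻¹ with hl
  have hl2 : Real.log 2 ≤ l := Real.log_le_log (by norm_num) hεi
  have hlog2 := Real.log_two_gt_d9
  have hL1 : 1 ≤ L := by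
    by_contra! h
    have : L = 0 := by omega
    subst this
    norm_num at hLb
    linarith
  have hL' : (1:ℝ) ≤ L := by exact_mod_cast hL1
  have hLl : (L:ℝ) ≤ 11 * l := by
    have h1 : Real.log (2 ^ L) ≤ Real.log (64 * ε⁻¹) := Real.log_le_log (by positivity) hLa
    rw [Real.log_pow, Real.log_mul (by norm_num) (by positivity), ← hl] at h1
    have h2 : Real.log 64 = 6 * Real.log 2 := by
      rw [show (64:ℝ) = 2 ^ 6 by norm_num, Real.log_pow]; norm_num
    rw [h2] at h1
    have h3 : (L:ℝ) * 0.69 ≤ L * Real.log 2 := by gcongr; linarith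
    linarith
  have hl1 : (1:ℝ) ≤ 11 * l := hL'.trans hLl
  have hL2 : 2 < 2 ^ L * (ε / 16) := by
    rw [pow_succ] at hLb
    nlinarith
  have hL3 : 2 ^ L * (ε / 16) ≤ 8 := by nlinarith
  set X : ℝ := 61600 * L ^ 2 * (68 * d / ε) / (ε/16) ^ 2 with hX
  have hX0 : 0 ≤ X := by positivity
  obtain ⟨x, hx, hxp⟩ := main_pts d ε hd hε hε1 L hL1 hL2 hL3 (⌊X⌋₊ + 1)
    (by push_cast; exact Nat.lt_floor_add_one X)
  refine ⟨L * (⌊X⌋₊ + 1), ?_, fun i => x (finProdFinEquiv.symm i).1 (finProdFinEquiv.symm i).2, ?_⟩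
  · have h1 : (⌊X⌋₊ : ℝ) ≤ X := Nat.floor_le hX0
    have h2 : X ≤ 61600 * (11 * l) ^ 2 * (68 * d / ε) / (ε/16) ^ 2 := by
      rw [hX]; gcongr
    have h3 : 61600 * (11 * l) ^ 2 * (68 * d / ε) / (ε/16) ^ 2 =
        61600 * 11 ^ 2 * 68 * 256 * (d * ε⁻¹ ^ 3 * l ^ 2) := by field_simp; norm_num
    have h4 : 1 ≤ 11 ^ 2 * (d * ε⁻¹ ^ 3 * l ^ 2) := by
      have a1 : 1 ≤ (11 * l) ^ 2 := one_le_pow₀ hl1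
      have a2 : 1 ≤ ε⁻¹ ^ 3 := one_le_pow₀ (by linarith)
      have a3 : 1 ≤ d * ε⁻¹ ^ 3 := one_le_mul_of_one_le_of_one_le hd' a2
      have a4 := one_le_mul_of_one_le_of_one_le a3 a1
      linarith
    have hT : 0 ≤ d * ε⁻¹ ^ 3 * l ^ 2 := by positivity
    push_cast
    calc (L:ℝ) * (⌊X⌋₊ + 1) ≤ (11 * l) * (61600 * 11 ^ 2 * 68 * 256 * (d * ε⁻¹ ^ 3 * l ^ 2)
          + 11 ^ 2 * (d * ε⁻¹ ^ 3 * l ^ 2)) := by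
          gcongr
          linarith
      _ = (11 * (61600 * 11 ^ 2 * 68 * 256 + 11 ^ 2)) * d * ε⁻¹ ^ 3 * l ^ 3 := by ring
  · classical
    let z : Fin (L * (⌊X⌋₊ + 1)) → (Fin d → ℝ) :=
      fun i => x (finProdFinEquiv.symm i).1 (finProdFinEquiv.symm i).2
    refine ⟨fun y => if h : ∃ g ∈ FdLog d, (fun i => g (z i)) = y then h.choose else 0,
      fun i => hx _ _, ?_⟩
    intro f hf
    have hex : ∃ g ∈ FdLog d, (fun i => g (z i)) = (fun i => f (z i)) := ⟨f, hf, rfl⟩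
    have hd1 : (if h : ∃ g ∈ FdLog d, (fun i => g (z i)) = (fun i => f (z i)) then h.choose else 0)
        = hex.choose := dif_pos hex
    obtain ⟨hg, hge⟩ := hex.choose_spec
    change eLpNorm (fun t => f t - (if h : ∃ g ∈ FdLog d, (fun i => g (z i)) = (fun i => f (z i))
      then h.choose else 0) t) 2 (volume.restrict (cube d)) ≤ ENNReal.ofReal ε
    rw [hd1]
    refine hxp f hf _ hg fun j i => ?_
    have := congrFun hge (finProdFinEquiv (j, i))
    simp only [z, Equiv.symm_apply_apply] at this
    exact this.symm
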